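/- For every real number s > 0, the series ∑_{n=1}^{∞} e^{−s n} · (∑_{k=1}^{n−1} 1/k) converges and its sum equals (s − ln(e^{s} − 1))/(e^{s} − 1). (This is the discrete Laplace transform of the discrete convolution of the sequences 1/n and 1, and underlies the inversion step in solving the initial value problem n·Δf(n) = 1, f(2) = 2.) -/

import Mathlib

/-- The generating function of the harmonic numbers. -/
theorem hasSum_pow_mul_sum_one_div {x : ℝ} (hx : |x| < 1) :
    HasSum (fun n : ℕ => x ^ n * ∑ k ∈ Finset.Icc 1 n, (1 : ℝ) / k)
      (-Real.log (1 - x) * (1 - x)⁻¹) := by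
  have hf : HasSum (fun n : ℕ => x ^ n / n) (-Real.log (1 - x)) := by
    rw [← hasSum_nat_add_iff' 1]
    simpa using Real.hasSum_pow_div_log_of_abs_lt_one hx
  have hg : HasSum (fun n : ℕ => x ^ n) (1 - x)⁻¹ := hasSum_geometric_of_abs_lt_one hx
  have hfg := hasSum_sum_range_mul_of_summable_norm hf.summable.norm hg.summable.norm
  rw [hf.tsum_eq, hg.tsum_eq] at hfg
  refine hfg.congr_fun fun n => ?_
  rw [Finset.range_eq_Ico, Finset.sum_eq_sum_Ico_succ_bot n.succ_pos, Finset.mul_sum]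
  simp only [Nat.cast_zero, div_zero, zero_mul, zero_add]
  refine Finset.sum_congr rfl fun k hk => ?_
  rw [div_mul_eq_mul_div, ← pow_add, Nat.add_sub_cancel' (by grind), mul_one_div]

/-- For `s > 0`, `∑_{n=1}^∞ e^{−sn} (∑_{k=1}^{n−1} 1/k) = (s − ln(e^s − 1))/(e^s − 1)`. -/
theorem stmt_6 (s : ℝ) (hs : 0 < s) :
    HasSum (fun n : ℕ => Real.exp (-s * (n + 1)) * ∑ k ∈ Finset.Icc 1 n, (1 : ℝ) / k)
      ((s - Real.log (Real.exp s - 1)) / (Real.exp s - 1)) := by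
  have hx : |Real.exp (-s)| < 1 := by
    rw [Real.abs_exp]
    simpa using hs
  have hpos : 0 < Real.exp s - 1 := sub_pos.mpr (Real.one_lt_exp_iff.mpr hs)
  have hsub : 1 - Real.exp (-s) = (Real.exp s - 1) / Real.exp s := by
    rw [Real.exp_neg]
    field_simp
  have hval : (s - Real.log (Real.exp s - 1)) / (Real.exp s - 1) =
      Real.exp (-s) * (-Real.log (1 - Real.exp (-s)) * (1 - Real.exp (-s))⁻¹) := by
    rw [hsub, Real.log_div hpos.ne' (Real.exp_ne_zero s), Real.log_exp, Real.exp_neg]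
    field_simp
    ring
  rw [hval]
  refine ((hasSum_pow_mul_sum_one_div hx).mul_left (Real.exp (-s))).congr_fun fun n => ?_
  rw [← mul_assoc, ← pow_succ', ← Real.exp_nat_mul]
  push_cast
  ring_nf
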